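/- Let n : ℕ and let ⟨·,·⟩ denote the Minkowski bilinear form on ℝ^{n+1}. Suppose K, D, F, Γ : Fin (n+1) → ℝ satisfy ⟨K,K⟩ = −2, ⟨K,D⟩ = 2, ⟨D,D⟩ = 14, ⟨K,F⟩ = −2, ⟨D,F⟩ = 8, ⟨F,F⟩ = 0, ⟨K,Γ⟩ = 4, ⟨D,Γ⟩ = 8, ⟨F,Γ⟩ = 8 and ⟨Γ,Γ⟩ = 0. Then 4·K + Γ = 2·F. -/

import Mathlib

/-- The Minkowski (Lorentzian) bilinear form on `ℝ^{n+1}`: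
`⟨x, y⟩ = x 0 * y 0 - ∑_{i=1}^{n} x i * y i`. -/
def mink (n : ℕ) (x y : Fin (n + 1) → ℝ) : ℝ :=
  x 0 * y 0 - ∑ i ∈ Finset.Ioi (0 : Fin (n + 1)), x i * y i

/-!
The class `V = 4K + Γ - 2F` is orthogonal to `K`, `F` and `Γ`, so `⟨V, V⟩ = 0` and `V` is
orthogonal to `F + Γ`, whose self-intersection is `16 > 0`. By the index theorem, a Lorentzian form
is negative definite on the orthogonal complement of a vector of positive square, hence `V = 0`.
-/

section Lorentzian

variable {R M : Type*} [CommRing R] [LinearOrder R] [AddCommGroup M] [Module R M]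
  {B : LinearMap.BilinForm R M}

/-- Symmetric bilinear forms of signature `(1, r)`, such as the intersection pairing on the
numerical classes of a surface: some vector of positive square has a negative definite orthogonal
complement. Negative definiteness is encoded as `0` being the only vector of nonnegative square,
and the coefficients may form an ordered ring, so that integral lattices are covered. -/
structure IsLorentzian (B : LinearMap.BilinForm R M) : Prop where
  isSymm : B.IsSymm
  exists_negDef_orthogonal : ∃ e, 0 < B e e ∧ ∀ x, B e x = 0 → 0 ≤ B x x → x = 0

theorem IsLorentzian.eq_zero_of_orthogonal_of_nonneg [IsStrictOrderedRing R]
    (hB : IsLorentzian B) {p v : M}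
    (hp : 0 < B p p) (hpv : B p v = 0) (hv : 0 ≤ B v v) : v = 0 := by
  obtain ⟨e, -, he⟩ := hB.exists_negDef_orthogonal
  have hvp : B v p = 0 := (hB.isSymm.eq p v).symm.trans hpv
  -- The form is nonnegative on the span of `p` and `v`, which meets the orthogonal complement of
  -- `e` in `w`.
  let w := B e p • v - B e v • p
  have hew : B e w = 0 := by
    simp only [w, map_sub, map_smul, smul_eq_mul]
    ring
  have hww : B w w = B e p ^ 2 * B v v + B e v ^ 2 * B p p := by
    simp only [w, map_sub, map_smul, LinearMap.sub_apply, LinearMap.smul_apply, smul_eq_mul, hpv,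
      hvp]
    ring
  have hw : w = 0 := he w hew (by rw [hww]; positivity)
  have hpw : B p w = -(B e v * B p p) := by
    simp only [w, map_sub, map_smul, smul_eq_mul, hpv, mul_zero, zero_sub]
  have hev : B e v = 0 := by
    rw [hw, map_zero, zero_eq_neg] at hpw
    exact (mul_eq_zero.mp hpw).resolve_right hp.ne'
  exact he v hev hv

theorem case9_genus3_component_general [IsStrictOrderedRing R] (hB : IsLorentzian B) {K F Γ : M}
    (hKK : B K K = -2) (hKF : B K F = -2) (hFF : B F F = 0)
    (hKΓ : B K Γ = 4) (hFΓ : B F Γ = 8) (hΓΓ : B Γ Γ = 0) :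
    4 • K + Γ = 2 • F := by
  have hFK : B F K = -2 := (hB.isSymm.eq K F).symm.trans hKF
  have hΓK : B Γ K = 4 := (hB.isSymm.eq K Γ).symm.trans hKΓ
  have hΓF : B Γ F = 8 := (hB.isSymm.eq F Γ).symm.trans hFΓ
  rw [← sub_eq_zero]
  set V := 4 • K + Γ - 2 • F with hV
  have expand (x : M) : B x V = 4 * B x K + B x Γ - 2 * B x F := by
    simp only [hV, map_sub, map_add, map_nsmul, nsmul_eq_mul, Nat.cast_ofNat]
  have hKV : B K V = 0 := by rw [expand, hKK, hKΓ, hKF]; norm_num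
  have hFV : B F V = 0 := by rw [expand, hFK, hFΓ, hFF]; norm_num
  have hΓV : B Γ V = 0 := by rw [expand, hΓK, hΓΓ, hΓF]; norm_num
  have hVV : B V V = 0 := by
    rw [expand, hB.isSymm.eq_iff.mp hKV, hB.isSymm.eq_iff.mp hΓV, hB.isSymm.eq_iff.mp hFV]
    norm_num
  have hpos : 0 < B (F + Γ) (F + Γ) := by
    simp only [map_add, LinearMap.add_apply, hFF, hFΓ, hΓF, hΓΓ]
    norm_num
  have horth : B (F + Γ) V = 0 := by rw [map_add, LinearMap.add_apply, hFV, hΓV, add_zero]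
  exact hB.eq_zero_of_orthogonal_of_nonneg hpos horth hVV.ge

end Lorentzian

/-- `mink n` bundled as a bilinear form, to which the results on Lorentzian forms apply. -/
def minkForm (n : ℕ) : LinearMap.BilinForm ℝ (Fin (n + 1) → ℝ) :=
  LinearMap.mk₂ ℝ (mink n)
    (fun x y z => by simp only [mink, Pi.add_apply, add_mul, Finset.sum_add_distrib]; ring)
    (fun c x y => by
      simp only [mink, Pi.smul_apply, smul_eq_mul, mul_assoc, mul_sub, Finset.mul_sum])
    (fun x y z => by simp only [mink, Pi.add_apply, mul_add, Finset.sum_add_distrib]; ring)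
    (fun c x y => by
      simp only [mink, Pi.smul_apply, smul_eq_mul, mul_left_comm _ c, mul_sub, Finset.mul_sum])

theorem mink_comm (n : ℕ) (x y : Fin (n + 1) → ℝ) : mink n x y = mink n y x := by
  simp only [mink, mul_comm]

theorem mink_single_zero_one (n : ℕ) (x : Fin (n + 1) → ℝ) : mink n (Pi.single 0 1) x = x 0 := by
  have hsum : ∑ i ∈ Finset.Ioi (0 : Fin (n + 1)), (Pi.single 0 1 : Fin (n + 1) → ℝ) i * x i = 0 :=
    Finset.sum_eq_zero fun i hi => by
      rw [Pi.single_eq_of_ne (Finset.mem_Ioi.mp hi).ne', zero_mul]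
  rw [mink, hsum, Pi.single_eq_same, one_mul, sub_zero]

theorem eq_zero_of_mink_self_nonneg {n : ℕ} {x : Fin (n + 1) → ℝ} (hx₀ : x 0 = 0)
    (hx : 0 ≤ mink n x x) : x = 0 := by
  have hnonneg : ∀ i ∈ Finset.Ioi (0 : Fin (n + 1)), 0 ≤ x i * x i :=
    fun i _ => mul_self_nonneg (x i)
  have hsum : ∑ i ∈ Finset.Ioi (0 : Fin (n + 1)), x i * x i = 0 := by
    rw [mink, hx₀, mul_zero, zero_sub, neg_nonneg] at hx
    exact hx.antisymm (Finset.sum_nonneg hnonneg)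
  funext i
  rcases (Fin.zero_le i).eq_or_lt with rfl | hi
  · exact hx₀
  · exact mul_self_eq_zero.mp
      ((Finset.sum_eq_zero_iff_of_nonneg hnonneg).mp hsum i (Finset.mem_Ioi.mpr hi))

theorem isLorentzian_minkForm (n : ℕ) : IsLorentzian (minkForm n) where
  isSymm := ⟨mink_comm n⟩
  exists_negDef_orthogonal := by
    refine ⟨Pi.single 0 1, ?_, fun x hx₀ hx => ?_⟩
    · exact (mink_single_zero_one n _).trans_gt (by simp)
    · exact eq_zero_of_mink_self_nonneg ((mink_single_zero_one n x).symm.trans hx₀) hx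

/-- Proposition 2.7 (case k = 9, genus-3 component with self-intersection 0):
`Γ₀ ≡ −4K_W + 2F`. -/
theorem case9_genus3_component (n : ℕ) (K D F Γ : Fin (n + 1) → ℝ)
    (hKK : mink n K K = -2) (hKD : mink n K D = 2) (hDD : mink n D D = 14)
    (hKF : mink n K F = -2) (hDF : mink n D F = 8) (hFF : mink n F F = 0)
    (hKΓ : mink n K Γ = 4) (hDΓ : mink n D Γ = 8) (hFΓ : mink n F Γ = 8)
    (hΓΓ : mink n Γ Γ = 0) :
    4 • K + Γ = 2 • F :=
  case9_genus3_component_general (isLorentzian_minkForm n) hKK hKF hFF hKΓ hFΓ hΓΓ
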